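/- arXiv:1304.2456 — 2 statements merged into one kernel-verified Lean document; each statement's English description precedes it below -/
import Mathlib

section
/- For every t ≥ 0 one has ∫_0^t X(s) ds = η(λ,t)·X(0) + ∫_0^t e^{−λ(t−s)} Z(s) ds, where η(λ,u) := λ⁻¹(1 − e^{−λu}). -/
open MeasureTheory

/-- For the OU-type equation `X t = X 0 - λ ∫_0^t X + Z t`,
`∫_0^t X = η(λ,t) X 0 + ∫_0^t e^{-λ(t-s)} Z s ds`, where
`η(λ,u) = λ⁻¹ (1 - e^{-λ u})`. -/
theorem integrated_OU_representation
    (lam γ β ρ : ℝ) (hlam : 0 < lam)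
    (X Z : ℝ → ℝ)
    (hXmeas : Measurable X) (hZmeas : Measurable Z)
    (hXint : ∀ T : ℝ, IntervalIntegrable X volume 0 T)
    (hZint : ∀ T : ℝ, IntervalIntegrable Z volume 0 T)
    (hZ0 : Z 0 = 0)
    (hX : ∀ t : ℝ, 0 ≤ t → X t = X 0 - lam * (∫ s in (0:ℝ)..t, X s) + Z t)
    (Y : ℝ → ℝ)
    (hY : ∀ t : ℝ, Y t = (∫ s in (0:ℝ)..t, (γ + β * X s)) + ρ * Z t)
    (eta : ℝ → ℝ → ℝ)
    (heta : ∀ u : ℝ, 0 ≤ u → eta lam u = lam⁻¹ * (1 - Real.exp (-lam * u)))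
    (t : ℝ) (ht : 0 ≤ t) :
    (∫ s in (0:ℝ)..t, X s)
      = eta lam t * X 0 + ∫ s in (0:ℝ)..t, Real.exp (-lam * (t - s)) * Z s := by
  set F : ℝ → ℝ := fun x => ∫ s in (0:ℝ)..x, X s with hF
  set g : ℝ → ℝ := fun s => Real.exp (-lam * (t - s)) with hg
  have hgd : ∀ x, HasDerivAt g (lam * g x) x := by
    intro x
    have h := (((hasDerivAt_id x).const_sub t).const_mul (-lam)).exp
    simp only [id] at h
    convert h using 1
    simp only [hg]; ring
  have hgC : ContDiff ℝ 1 g := by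
    simp only [hg]; fun_prop
  have hgc : Continuous g := hgC.continuous
  have hgAC : AbsolutelyContinuousOnInterval g 0 t := by
    obtain ⟨K, hK⟩ := hgC.contDiffOn.exists_lipschitzOnWith (s := Set.uIcc 0 t) one_ne_zero
      (convex_uIcc 0 t) isCompact_uIcc
    exact hK.absolutelyContinuousOnInterval
  have hFAC : AbsolutelyContinuousOnInterval F 0 t :=
    (hXint t).absolutelyContinuousOnInterval_intervalIntegral (by simp)
  have key := hgAC.integral_deriv_mul_eq_sub hFAC
  have hcongr : (∫ x in (0:ℝ)..t, deriv g x * F x + g x * deriv F x)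
      = ∫ x in (0:ℝ)..t, (g x * X 0 + g x * Z x) := by
    apply intervalIntegral.integral_congr_ae
    filter_upwards [(hXint t).ae_hasDerivAt_integral] with x hx hxm
    have hd : deriv F x = X x := (hx (Set.uIoc_subset_uIcc hxm) 0 (by simp)).deriv
    rw [Set.uIoc_of_le ht] at hxm
    rw [hd, (hgd x).deriv, hX x hxm.1.le]
    simp only [hF]; ring
  have hi1 : IntervalIntegrable (fun x => g x * X 0) volume 0 t :=
    Continuous.intervalIntegrable (by fun_prop) _ _
  rw [hcongr, intervalIntegral.integral_add hi1
    ((hZint t).continuousOn_mul hgc.continuousOn),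
    intervalIntegral.integral_mul_const] at key
  have hgint : (∫ x in (0:ℝ)..t, g x) = eta lam t := by
    have h := intervalIntegral.integral_eq_sub_of_hasDerivAt (fun x _ => hgd x)
      (Continuous.intervalIntegrable (by fun_prop) 0 t)
    rw [intervalIntegral.integral_const_mul] at h
    rw [heta t ht, eq_inv_mul_iff_mul_eq₀ hlam.ne', h]
    simp [hg]
  have hF0 : F 0 = 0 := by simp [hF]
  have hgt : g t = 1 := by simp [hg]
  rw [hgint, hF0, hgt] at key
  change F t = _
  linarith
end

section
/- For every λ > 0, T > 0, ρ, β ∈ ℝ and integer r ≥ 0, T^{−1}·∫_0^T (ρ + β·η(λ,v))^r dv = Σ_{j=0}^{r} C(r,j)·ρ^{r−j}·β^{j}·M_T(j), where C(r,j) denotes the binomial coefficient. -/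
open MeasureTheory

/-- `η(λ,u) = λ⁻¹ (1 - e^{-λu})`. -/
noncomputable def eta (lam u : ℝ) : ℝ := lam⁻¹ * (1 - Real.exp (-lam * u))

/-- `M_T(0) = 1` and, for `j ≥ 1`,
`M_T(j) = λ^{-j} - T⁻¹ λ^{-(j+1)} Σ_{k=1}^{j} k⁻¹ (λ η(λ,T))^k`
(the formula below also gives `1` at `j = 0` since the sum is then empty). -/
noncomputable def MM (lam T : ℝ) (j : ℕ) : ℝ :=
  lam ^ (-(j : ℤ)) - T⁻¹ * lam ^ (-(j : ℤ) - 1) *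
    ∑ k ∈ Finset.Icc 1 j, (k : ℝ)⁻¹ * (lam * eta lam T) ^ k

theorem aux_deriv (lam : ℝ) (hlam : 0 < lam) (j : ℕ) (v : ℝ) :
    HasDerivAt (fun v : ℝ => v - lam⁻¹ *
      ∑ k ∈ Finset.range j, ((k : ℝ) + 1)⁻¹ * (1 - Real.exp (-lam * v)) ^ (k + 1))
      ((1 - Real.exp (-lam * v)) ^ j) v := by
  induction j with
  | zero =>
    simp only [Finset.range_zero, Finset.sum_empty, mul_zero, sub_zero, pow_zero]
    exact hasDerivAt_id v
  | succ n ih =>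
    have h1 : HasDerivAt (fun v : ℝ => 1 - Real.exp (-lam * v))
        (lam * Real.exp (-lam * v)) v := by
      have := (((hasDerivAt_id v).const_mul (-lam)).exp).const_sub 1
      refine HasDerivAt.congr_deriv this ?_
      simp only [id, mul_one]
      ring
    have h2 := ih.sub (((h1.pow (n + 1)).const_mul (((n : ℝ) + 1)⁻¹)).const_mul lam⁻¹)
    have hn : (n : ℝ) + 1 ≠ 0 := by positivity
    refine HasDerivAt.congr_deriv (HasDerivAt.congr_of_eventuallyEq h2
      (Filter.Eventually.of_forall fun w => ?_)) ?_
    · simp only [Finset.sum_range_succ, Pi.sub_apply, Pi.pow_apply]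
      ring
    · push_cast
      field_simp
      ring

theorem aux_integral (lam T : ℝ) (hlam : 0 < lam) (hT : 0 < T) (j : ℕ) :
    T⁻¹ * (∫ v in (0:ℝ)..T, eta lam v ^ j) = MM lam T j := by
  have hI : ∫ v in (0:ℝ)..T, (1 - Real.exp (-lam * v)) ^ j = _ :=
    intervalIntegral.integral_eq_sub_of_hasDerivAt
      (fun v _ => aux_deriv lam hlam j v)
      (Continuous.intervalIntegrable (by fun_prop) _ _)
  have hl : lam ≠ 0 := hlam.ne'
  have hs : ∑ k ∈ Finset.Icc 1 j, (k : ℝ)⁻¹ * (lam * eta lam T) ^ k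
      = ∑ k ∈ Finset.range j, ((k : ℝ) + 1)⁻¹ * (1 - Real.exp (-lam * T)) ^ (k + 1) := by
    have he : lam * eta lam T = 1 - Real.exp (-lam * T) := by
      unfold eta
      field_simp
    rw [he, Finset.range_eq_Ico, ← Finset.Ico_add_one_right_eq_Icc,
      ← Finset.sum_Ico_add' (fun k : ℕ => (k : ℝ)⁻¹ * (1 - Real.exp (-lam * T)) ^ k) 0 j 1]
    simp
  unfold MM
  rw [hs]
  simp only [eta, mul_pow, intervalIntegral.integral_const_mul]
  rw [hI, zpow_sub₀ hl, zpow_neg, zpow_natCast, zpow_one]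
  simp
  field_simp

/-- For `λ > 0`, `T > 0`, `ρ, β ∈ ℝ` and integers `r ≥ 0`,
`T⁻¹ ∫_0^T (ρ + β η(λ,v))^r dv = Σ_{j=0}^r C(r,j) ρ^{r-j} β^j M_T(j)`. -/
theorem integral_binom_eta_pow (lam T ρ β : ℝ) (hlam : 0 < lam) (hT : 0 < T)
    (r : ℕ) :
    T⁻¹ * (∫ v in (0:ℝ)..T, (ρ + β * eta lam v) ^ r)
      = ∑ j ∈ Finset.range (r + 1),
          (r.choose j : ℝ) * ρ ^ (r - j) * β ^ j * MM lam T j := by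
  have hc : Continuous (eta lam) := by
    unfold eta
    fun_prop
  have h : ∀ v : ℝ, (ρ + β * eta lam v) ^ r = ∑ j ∈ Finset.range (r + 1),
      ((r.choose j : ℝ) * ρ ^ (r - j) * β ^ j) * eta lam v ^ j := by
    intro v
    rw [add_comm, add_pow]
    refine Finset.sum_congr rfl fun j _ => ?_
    rw [mul_pow]
    ring
  simp_rw [h]
  rw [intervalIntegral.integral_finsetSum
    (fun j _ => Continuous.intervalIntegrable (by fun_prop) _ _), Finset.mul_sum]
  refine Finset.sum_congr rfl fun j _ => ?_
  rw [intervalIntegral.integral_const_mul, ← aux_integral lam T hlam hT j]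
  ring
end
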